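/- As α → 0⁺, h(α) ~ √( (1/π)·log(1/α) ), i.e. the ratio h(α) / √( log(1/α)/π ) tends to 1 as α → 0⁺. -/

import Mathlib

open MeasureTheory Real

/-- The standard normal cumulative distribution function Φ. -/
noncomputable def stdNormalCDF (x : ℝ) : ℝ :=
  ∫ t in Set.Iic x, Real.exp (-t ^ 2 / 2) / Real.sqrt (2 * Real.pi)

/-- The standard normal density φ. -/
noncomputable def stdNormalPDF (x : ℝ) : ℝ :=
  Real.exp (-x ^ 2 / 2) / Real.sqrt (2 * Real.pi)

/-- The standard normal quantile function Φ⁻¹. -/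
noncomputable def stdNormalQuantile (u : ℝ) : ℝ :=
  sInf {x : ℝ | u ≤ stdNormalCDF x}

/-- h(α) := φ(Φ⁻¹(1-α)) / (α √(2π)). -/
noncomputable def hFun (a : ℝ) : ℝ :=
  stdNormalPDF (stdNormalQuantile (1 - a)) / (a * Real.sqrt (2 * Real.pi))

open Filter Topology

lemma integrable_stdNormalPDF : Integrable stdNormalPDF := by
  have h := (integrable_exp_neg_mul_sq (b := 1 / 2) (by norm_num)).div_const (√(2 * π))
  refine h.congr (Eventually.of_forall fun x => ?_)
  simp only [stdNormalPDF]
  ring_nf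

lemma integral_stdNormalPDF : ∫ t, stdNormalPDF t = 1 := by
  have h : ∀ t, stdNormalPDF t = rexp (-(1 / 2) * t ^ 2) / √(2 * π) := fun t => by
    simp only [stdNormalPDF]
    ring_nf
  simp_rw [h]
  rw [integral_div, integral_gaussian, show π / (1 / 2) = 2 * π by ring]
  exact div_self (by positivity)

lemma stdNormalPDF_pos (x : ℝ) : 0 < stdNormalPDF x := by
  unfold stdNormalPDF
  positivity

lemma continuous_stdNormalPDF : Continuous stdNormalPDF := by
  unfold stdNormalPDF
  fun_prop

lemma hasDerivAt_stdNormalPDF (x : ℝ) :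
    HasDerivAt stdNormalPDF (-x * stdNormalPDF x) x := by
  have h : HasDerivAt (fun y : ℝ => -y ^ 2 / 2) (-x) x := by
    refine ((hasDerivAt_pow 2 x).neg.div_const 2).congr_deriv ?_
    norm_num
    ring
  refine (h.exp.div_const (√(2 * π))).congr_deriv ?_
  simp only [stdNormalPDF]
  ring

lemma tendsto_stdNormalPDF_atTop : Tendsto stdNormalPDF atTop (𝓝 0) := by
  have h : Tendsto (fun x : ℝ => -x ^ 2 / 2) atTop atBot := by
    have := (tendsto_pow_atTop (α := ℝ) two_ne_zero).const_mul_atTop_of_neg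
      (show (-(1 / 2) : ℝ) < 0 by norm_num)
    exact this.congr fun x => by ring
  rw [← zero_div (√(2 * π))]
  exact (tendsto_exp_atBot.comp h).div_const _

lemma hasDerivAt_stdNormalCDF (x : ℝ) : HasDerivAt stdNormalCDF (stdNormalPDF x) x := by
  have h : ∀ y, stdNormalCDF y = stdNormalCDF 0 + ∫ t in (0 : ℝ)..y, stdNormalPDF t := fun y => by
    rw [← intervalIntegral.integral_Iic_sub_Iic integrable_stdNormalPDF.integrableOn
      integrable_stdNormalPDF.integrableOn]
    simp [stdNormalCDF, stdNormalPDF]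
  rw [funext h]
  exact (continuous_stdNormalPDF.integral_hasStrictDerivAt 0 x).hasDerivAt.const_add _

lemma continuous_stdNormalCDF : Continuous stdNormalCDF :=
  continuous_iff_continuousAt.2 fun x => (hasDerivAt_stdNormalCDF x).continuousAt

lemma strictMono_stdNormalCDF : StrictMono stdNormalCDF :=
  strictMono_of_deriv_pos fun x => by
    rw [(hasDerivAt_stdNormalCDF x).deriv]
    exact stdNormalPDF_pos x

lemma tendsto_stdNormalCDF_atTop : Tendsto stdNormalCDF atTop (𝓝 1) := by
  rw [← integral_stdNormalPDF]
  exact (aecover_Iic tendsto_id).integral_tendsto_of_countably_generated integrable_stdNormalPDF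

lemma stdNormalCDF_lt_one (x : ℝ) : stdNormalCDF x < 1 :=
  (strictMono_stdNormalCDF (lt_add_one x)).trans_le
    (strictMono_stdNormalCDF.monotone.ge_of_tendsto tendsto_stdNormalCDF_atTop _)

lemma stdNormalQuantile_stdNormalCDF (x : ℝ) : stdNormalQuantile (stdNormalCDF x) = x := by
  simp only [stdNormalQuantile, strictMono_stdNormalCDF.le_iff_le]
  exact csInf_Ici

/-- For `a` small enough, `1 - a` is attained by the CDF beyond any given `M`. -/
lemma exists_ge_stdNormalCDF_eq {M a : ℝ} (ha : 0 < a) (haM : a < 1 - stdNormalCDF M) :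
    ∃ x, M < x ∧ stdNormalCDF x = 1 - a := by
  obtain ⟨y, hy⟩ :=
    (tendsto_stdNormalCDF_atTop.eventually (lt_mem_nhds (show 1 - a < 1 by linarith))).exists
  obtain ⟨x, hx⟩ := mem_range_of_exists_le_of_exists_ge continuous_stdNormalCDF
    ⟨M, show stdNormalCDF M ≤ 1 - a by linarith⟩ ⟨y, hy.le⟩
  exact ⟨x, strictMono_stdNormalCDF.lt_iff_lt.1 (by linarith), hx⟩

lemma eventually_exists_stdNormalCDF_eq (M : ℝ) :
    ∀ᶠ a in 𝓝[>] (0 : ℝ), ∃ x, M < x ∧ stdNormalCDF x = 1 - a := by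
  filter_upwards [Ioo_mem_nhdsGT (sub_pos.2 (stdNormalCDF_lt_one M))] with a ha
  exact exists_ge_stdNormalCDF_eq ha.1 ha.2

lemma tendsto_stdNormalQuantile_one_sub :
    Tendsto (fun a => stdNormalQuantile (1 - a)) (𝓝[>] 0) atTop := by
  refine tendsto_atTop.2 fun M => ?_
  filter_upwards [eventually_exists_stdNormalCDF_eq M] with a ⟨x, hMx, hx⟩
  rw [← hx, stdNormalQuantile_stdNormalCDF]
  exact hMx.le

lemma eventually_one_sub_stdNormalCDF_quantile :
    ∀ᶠ a in 𝓝[>] (0 : ℝ), 1 - stdNormalCDF (stdNormalQuantile (1 - a)) = a := by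
  filter_upwards [eventually_exists_stdNormalCDF_eq 0] with a ⟨x, _, hx⟩
  rw [← hx, stdNormalQuantile_stdNormalCDF, hx]
  ring

/-- The Mills ratio of the standard normal distribution is asymptotic to `1 / x`. -/
lemma tendsto_mills_ratio :
    Tendsto (fun x => (1 - stdNormalCDF x) / (stdNormalPDF x / x)) atTop (𝓝 1) := by
  refine HasDerivAt.lhopital_zero_atTop (f' := fun x => -stdNormalPDF x)
    (g' := fun x => -stdNormalPDF x * (1 + (x ^ 2)⁻¹)) ?_ ?_ ?_ ?_ ?_ ?_
  · exact Eventually.of_forall fun x => (hasDerivAt_stdNormalCDF x).const_sub 1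
  · filter_upwards [eventually_gt_atTop 0] with x hx
    refine ((hasDerivAt_stdNormalPDF x).div (hasDerivAt_id x) hx.ne').congr_deriv ?_
    simp only [id]
    field_simp
    ring
  · filter_upwards with x
    have := stdNormalPDF_pos x
    have : 0 < stdNormalPDF x * (1 + (x ^ 2)⁻¹) := by positivity
    linarith
  · simpa using tendsto_stdNormalCDF_atTop.const_sub 1
  · simpa [div_eq_mul_inv] using tendsto_stdNormalPDF_atTop.mul tendsto_inv_atTop_zero
  · have h : Tendsto (fun x : ℝ => (1 + (x ^ 2)⁻¹)⁻¹) atTop (𝓝 1) := by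
      have h₀ := (tendsto_inv_atTop_zero.comp
        (tendsto_pow_atTop (α := ℝ) two_ne_zero)).const_add 1
      simpa using h₀.inv₀ (by norm_num)
    refine h.congr fun x => ?_
    have := (stdNormalPDF_pos x).ne'
    field_simp

lemma tendsto_log_inv_one_sub_stdNormalCDF_div_sq :
    Tendsto (fun x => 2 * log (1 / (1 - stdNormalCDF x)) / x ^ 2) atTop (𝓝 1) := by
  have hsq : Tendsto (fun x : ℝ => (x ^ 2)⁻¹) atTop (𝓝 0) :=
    tendsto_inv_atTop_zero.comp (tendsto_pow_atTop two_ne_zero)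
  have hlog : Tendsto (fun x : ℝ => log x / x ^ 2) atTop (𝓝 0) := by
    have := (isLittleO_log_rpow_atTop (r := 2) (by norm_num)).tendsto_div_nhds_zero
    simpa using this
  have hm : Tendsto (fun x => log ((1 - stdNormalCDF x) / (stdNormalPDF x / x))) atTop (𝓝 0) := by
    simpa using tendsto_mills_ratio.log one_ne_zero
  have key := (((hlog.const_mul 2).const_add 1).add (hsq.const_mul (2 * log (√(2 * π))))).sub
    ((hm.mul hsq).const_mul 2)
  simp only [mul_zero, add_zero, sub_zero] at key
  refine key.congr' ?_
  filter_upwards [eventually_gt_atTop 0] with x hx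
  have hQ : 1 - stdNormalCDF x ≠ 0 := (sub_pos.2 (stdNormalCDF_lt_one x)).ne'
  have hφ := (stdNormalPDF_pos x).ne'
  have hlogφ : log (stdNormalPDF x) = -x ^ 2 / 2 - log (√(2 * π)) := by
    rw [stdNormalPDF, log_div (exp_ne_zero _) (by positivity), log_exp]
  rw [log_div hQ (div_ne_zero hφ hx.ne'), log_div hφ hx.ne', hlogφ, one_div, log_inv]
  field_simp
  ring

/-- As α → 0⁺, h(α) ~ √(log(1/α)/π). -/
theorem hFun_asymptotics :
    Filter.Tendsto (fun a : ℝ => hFun a / Real.sqrt (Real.log (1 / a) / Real.pi))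
      (nhdsWithin 0 (Set.Ioi 0)) (nhds 1) := by
  have h : Tendsto (fun x => ((1 - stdNormalCDF x) / (stdNormalPDF x / x))⁻¹ /
      √(2 * log (1 / (1 - stdNormalCDF x)) / x ^ 2)) atTop (𝓝 1) := by
    have h₀ := (tendsto_mills_ratio.inv₀ one_ne_zero).div
      tendsto_log_inv_one_sub_stdNormalCDF_div_sq.sqrt (by simp)
    rwa [sqrt_one, inv_one, div_one] at h₀
  refine (h.comp tendsto_stdNormalQuantile_one_sub).congr' ?_
  filter_upwards [eventually_one_sub_stdNormalCDF_quantile,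
    tendsto_stdNormalQuantile_one_sub.eventually_gt_atTop 0] with a ha hq
  simp only [Function.comp_apply, ha, hFun]
  generalize stdNormalQuantile (1 - a) = q at hq
  have hsqrt : √(2 * π) * √(log (1 / a) / π) = √(2 * log (1 / a)) := by
    rw [← sqrt_mul (by positivity)]
    congr 1
    field_simp
  rw [sqrt_div' _ (sq_nonneg q), sqrt_sq hq.le, div_div, mul_assoc, hsqrt, inv_div]
  field_simp
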